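/- arXiv:1012.3826 — 2 statements merged into one kernel-verified Lean document; each statement's English description precedes it below -/
import Mathlib

section
/- At every point x ∈ U₀, the series F satisfies the inhomogeneous equation Σ_{i=1}^n x_{2i}·∂F/∂x_{2i}(x) + (γ+1)·F(x) = g(b,x) − g(a,x), where g(t,x) = t^{γ+1} ∏_{k=1}^n (x_{1k} + x_{2k} t)^{α_k}. -/
open Complex Function Polynomial

/-- Partial derivative of `f` with respect to the coordinate `p`. -/
noncomputable def pd {n : ℕ} (p : Fin 2 × Fin n)
    (f : ((Fin 2 × Fin n) → ℝ) → ℂ) (x : (Fin 2 × Fin n) → ℝ) : ℂ :=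
  deriv (fun s : ℝ => f (Function.update x p s)) (x p)

/-- The coefficient
`c_m = (−1)^{|m|} (∏ₖ (−α_k)_{m_k}) (b^{γ+|m|+1} − a^{γ+|m|+1}) / ((γ+|m|+1) ∏ₖ m_k!)`,
where `(z)_j` is the Pochhammer symbol. -/
noncomputable def cm {n : ℕ} (α : Fin n → ℂ) (γ : ℂ) (a b : ℝ)
    (m : Fin n → ℕ) : ℂ :=
  (-1 : ℂ) ^ (∑ k, m k) * (∏ k, (ascPochhammer ℂ (m k)).eval (-(α k)))
    * ((b : ℂ) ^ (γ + ((∑ k, m k : ℕ) : ℂ) + 1)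
        - (a : ℂ) ^ (γ + ((∑ k, m k : ℕ) : ℂ) + 1))
    / ((γ + ((∑ k, m k : ℕ) : ℂ) + 1) * ∏ k, ((m k).factorial : ℂ))

/-- The series `F(x) = (∏ₖ x_{1k}^{α_k}) Σ_{m ∈ ℕⁿ} c_m ∏ₖ (x_{2k}/x_{1k})^{m_k}`;
the first row of `x` is indexed by `0 : Fin 2`, the second row by `1 : Fin 2`. -/
noncomputable def Fser {n : ℕ} (α : Fin n → ℂ) (γ : ℂ) (a b : ℝ)
    (x : (Fin 2 × Fin n) → ℝ) : ℂ :=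
  (∏ k, (x (0, k) : ℂ) ^ (α k)) *
    ∑' m : Fin n → ℕ, cm α γ a b m * ∏ k, ((x (1, k) / x (0, k) : ℝ) : ℂ) ^ m k

/-- `g(t,x) = t^(γ+1) ∏ₖ (x_{1k} + x_{2k} t)^{α_k}`. -/
noncomputable def gfun {n : ℕ} (α : Fin n → ℂ) (γ : ℂ) (t : ℝ)
    (x : (Fin 2 × Fin n) → ℝ) : ℂ :=
  (t : ℂ) ^ (γ + 1) * ∏ k, ((x (0, k) : ℂ) + (x (1, k) : ℂ) * (t : ℂ)) ^ (α k)

noncomputable def bet (α : ℂ) (m : ℕ) : ℂ :=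
  (-1 : ℂ) ^ m * (ascPochhammer ℂ m).eval (-α) / (m.factorial : ℂ)

lemma bet_eq (α : ℂ) (m : ℕ) : bet α m = Ring.choose α m := by
  have h1 := Ring.descPochhammer_eq_factorial_smul_choose α m
  have hm : (m.factorial : ℂ) ≠ 0 := by exact_mod_cast m.factorial_ne_zero
  rw [bet, div_eq_iff hm, mul_comm (Ring.choose α m), ← nsmul_eq_mul, ← h1]
  clear h1 hm
  induction m with
  | zero => simp
  | succ k ih =>
    rw [descPochhammer_succ_right, Polynomial.smeval_mul, ← ih, ascPochhammer_succ_right]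
    simp [Polynomial.smeval_sub, Polynomial.smeval_natCast]
    ring

lemma bet_norm_summable (α : ℂ) (r : ℝ) (h0 : 0 ≤ r) (h1 : r < 1) :
    Summable fun m => ‖bet α m‖ * r ^ m := by
  have h := (binomialSeries ℂ α).summable_norm_apply (x := (r : ℂ)) (by
    refine Metric.eball_subset_eball binomialSeries_radius_ge_one ?_
    simp [enorm_eq_nnnorm]
    rw [← NNReal.coe_lt_coe]; simpa [abs_of_nonneg h0] using h1)
  refine h.congr fun m => ?_
  rw [binomialSeries_apply]
  simp [bet_eq, abs_of_nonneg h0, -FormalMultilinearSeries.apply_eq_prod_smul_coeff]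

lemma bet_hasSum (α : ℂ) (r : ℝ) (h0 : 0 ≤ r) (h1 : r < 1) :
    HasSum (fun m => bet α m * (r : ℂ) ^ m) ((1 + (r : ℂ)) ^ α) := by
  have h := (Complex.one_add_cpow_hasFPowerSeriesOnBall_zero (a := α)).hasSum (y := (r : ℂ)) (by
    simp [enorm_eq_nnnorm]
    rw [← NNReal.coe_lt_coe]; simpa [abs_of_nonneg h0] using h1)
  simp only [binomialSeries_apply] at h
  simpa [bet_eq] using h

lemma bet_norm_summable' (α : ℂ) (r : ℝ) (h0 : 0 < r) (h1 : r < 1) :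
    Summable fun m => ‖bet α m‖ * (m * r ^ m) := by
  obtain ⟨q, hq, hq1⟩ := exists_between h1
  have hq0 : 0 < q := h0.trans hq
  have h2 := bet_norm_summable α q hq0.le hq1
  obtain ⟨K, hK⟩ := (h2.tendsto_atTop_zero.bddAbove_range)
  have h3 := (summable_pow_mul_geometric_of_norm_lt_one 1 (r := r / q) (by
    rw [Real.norm_eq_abs, abs_of_pos (by positivity), div_lt_one hq0]; exact hq)).mul_left K
  refine Summable.of_nonneg_of_le (fun m => by positivity) (fun m => ?_) h3
  have : ‖bet α m‖ * q ^ m ≤ K := hK ⟨m, rfl⟩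
  calc ‖bet α m‖ * (m * r ^ m) = (‖bet α m‖ * q ^ m) * (m ^ 1 * (r / q) ^ m) := by
        rw [div_pow]; field_simp
    _ ≤ _ := by gcongr

lemma mul_hasSum_aux {R ι κ : Type*} [NormedCommRing R] [CompleteSpace R] (f : ι → R) (g : κ → R)
    (s t : R) (hf : HasSum f s) (hg : HasSum g t) (hf' : Summable fun i => ‖f i‖)
    (hg' : Summable fun i => ‖g i‖) :
    HasSum (fun p : ι × κ => f p.1 * g p.2) (s * t) ∧
      Summable (fun p : ι × κ => ‖f p.1 * g p.2‖) :=
  ⟨hf.mul hg (summable_mul_of_summable_norm hf' hg'), hf'.mul_norm hg'⟩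

lemma pi_hasSum {R : Type*} [NormedCommRing R] [CompleteSpace R] {n : ℕ} (f : Fin n → ℕ → R)
    (s : Fin n → R)
    (hf : ∀ k, HasSum (f k) (s k)) (hn : ∀ k, Summable fun m => ‖f k m‖) :
    HasSum (fun m : Fin n → ℕ => ∏ k, f k (m k)) (∏ k, s k) ∧
    Summable (fun m : Fin n → ℕ => ‖∏ k, f k (m k)‖) := by
  induction n with
  | zero =>
    have h' := hasSum_unique (fun m : Fin 0 → ℕ => ‖∏ k, f k (m k)‖)
    refine ⟨?_, h'.summable⟩
    simp
  | succ n ih =>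
    obtain ⟨i1, i2⟩ := ih (fun k => f k.succ) (fun k => s k.succ) (fun k => hf _) (fun k => hn _)
    have e : ∀ p : ℕ × (Fin n → ℕ), ∏ k, f k ((Fin.consEquiv (fun _ => ℕ)) p k)
        = f 0 p.1 * ∏ k : Fin n, f k.succ (p.2 k) := by
      intro p; rw [Fin.prod_univ_succ]; rfl
    obtain ⟨G, hG⟩ : ∃ G : (Fin n → ℕ) → R, G = fun m => ∏ k : Fin n, f k.succ (m k) := ⟨_, rfl⟩
    obtain ⟨t, ht⟩ : ∃ t : R, t = ∏ k : Fin n, s k.succ := ⟨_, rfl⟩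
    have j1 : HasSum G t := by rw [hG, ht]; exact i1
    have j2 : Summable fun m => ‖G m‖ := by rw [hG]; exact i2
    obtain ⟨h, hs⟩ := mul_hasSum_aux (f 0) G (s 0) t (hf 0) j1 (hn 0) j2
    rw [hG] at h hs
    rw [ht] at h
    constructor
    · rw [← (Fin.consEquiv (fun _ => ℕ)).hasSum_iff, Fin.prod_univ_succ]
      have e2 : ((fun m : Fin (n+1) → ℕ => ∏ k, f k (m k)) ∘ (Fin.consEquiv (fun _ => ℕ)))
        = fun p : ℕ × (Fin n → ℕ) => f 0 p.1 * ∏ k : Fin n, f k.succ (p.2 k) := funext e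
      rw [e2]
      exact h
    · rw [← (Fin.consEquiv (fun _ => ℕ)).summable_iff]
      have e2 : ((fun m : Fin (n+1) → ℕ => ‖∏ k, f k (m k)‖) ∘ (Fin.consEquiv (fun _ => ℕ)))
        = fun p : ℕ × (Fin n → ℕ) => ‖f 0 p.1 * ∏ k : Fin n, f k.succ (p.2 k)‖ :=
        funext fun p => congrArg norm (e p)
      rw [e2]
      exact hs

lemma cm_eq {n : ℕ} (α : Fin n → ℂ) (γ : ℂ) (a b : ℝ) (ha : 0 < a) (hb : 0 < b) (m : Fin n → ℕ) :
    cm α γ a b m = (∏ k, bet (α k) (m k)) *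
      ((b : ℂ) ^ (γ + 1) * (b : ℂ) ^ (∑ k, m k) - (a : ℂ) ^ (γ + 1) * (a : ℂ) ^ (∑ k, m k))
      / (γ + ((∑ k, m k : ℕ) : ℂ) + 1) := by
  have hb' : (b : ℂ) ≠ 0 := by exact_mod_cast hb.ne'
  have ha' : (a : ℂ) ≠ 0 := by exact_mod_cast ha.ne'
  have h : ∀ k : ℕ, γ + (k : ℂ) + 1 = (γ + 1) + (k : ℂ) := fun k => by ring
  unfold cm
  simp only [bet, Finset.prod_div_distrib, Finset.prod_mul_distrib, Finset.prod_pow_eq_pow_sum]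
  rw [h, Complex.cpow_add _ _ hb', Complex.cpow_add _ _ ha', Complex.cpow_natCast,
    Complex.cpow_natCast]
  have h2 : ∏ k, ((m k).factorial : ℂ) ≠ 0 :=
    Finset.prod_ne_zero_iff.2 fun k _ => by exact_mod_cast (m k).factorial_ne_zero
  rw [mul_comm (γ + 1 + _) (∏ k, ((m k).factorial : ℂ)), ← div_div]
  congr 1
  field_simp

lemma inv_bound (γ : ℂ) : ∃ K : ℝ, 0 ≤ K ∧ ∀ j : ℕ, ‖(γ + (j : ℂ) + 1)⁻¹‖ ≤ K := by
  have h : Filter.Tendsto (fun j : ℕ => ‖(γ + (j : ℂ) + 1)⁻¹‖) Filter.atTop (nhds 0) := by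
    simp only [norm_inv]
    apply Filter.Tendsto.inv_tendsto_atTop
    have h1 : Filter.Tendsto (fun j : ℕ => (j : ℝ) + -‖γ + 1‖) Filter.atTop Filter.atTop :=
      Filter.tendsto_atTop_add_const_right _ _ tendsto_natCast_atTop_atTop
    refine Filter.tendsto_atTop_mono (fun j => ?_) h1
    have h2 := norm_sub_norm_le (j : ℂ) (-(γ + 1))
    rw [norm_neg, Complex.norm_natCast] at h2
    rw [show γ + (j : ℂ) + 1 = j - -(γ + 1) by ring]
    linarith
  obtain ⟨K, hK⟩ := h.bddAbove_range
  exact ⟨K, (norm_nonneg _).trans (hK ⟨0, rfl⟩), fun j => hK ⟨j, rfl⟩⟩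

lemma cm_bound {n : ℕ} (α : Fin n → ℂ) (γ : ℂ) (a b : ℝ) (ha : 0 < a) (hab : a < b) :
    ∃ C : ℝ, 0 ≤ C ∧ ∀ m : Fin n → ℕ, ‖cm α γ a b m‖ ≤ C * ∏ k, (‖bet (α k) (m k)‖ * b ^ m k) := by
  obtain ⟨K, hK0, hK⟩ := inv_bound γ
  have hb := ha.trans hab
  refine ⟨(‖(b : ℂ) ^ (γ + 1)‖ + ‖(a : ℂ) ^ (γ + 1)‖) * K, by positivity, fun m => ?_⟩
  rw [cm_eq α γ a b ha hb, div_eq_mul_inv, norm_mul, norm_mul, Finset.prod_mul_distrib,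
    Finset.prod_pow_eq_pow_sum, norm_prod]
  have h1 : ‖(b : ℂ) ^ (γ + 1) * (b : ℂ) ^ (∑ k, m k) - (a : ℂ) ^ (γ + 1) * (a : ℂ) ^ (∑ k, m k)‖
      ≤ (‖(b : ℂ) ^ (γ + 1)‖ + ‖(a : ℂ) ^ (γ + 1)‖) * b ^ (∑ k, m k) := by
    refine (norm_sub_le _ _).trans ?_
    rw [norm_mul, norm_mul, norm_pow, norm_pow, add_mul]
    simp only [Complex.norm_real, Real.norm_eq_abs, abs_of_pos ha, abs_of_pos hb]
    gcongr
  calc _ ≤ (∏ k, ‖bet (α k) (m k)‖) *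
        ((‖(b : ℂ) ^ (γ + 1)‖ + ‖(a : ℂ) ^ (γ + 1)‖) * b ^ (∑ k, m k)) * K := by
          gcongr
          exact hK _
    _ = _ := by ring

set_option maxHeartbeats 1000000 in
lemma pd_lemma {n : ℕ} (α : Fin n → ℂ) (γ : ℂ) (a b : ℝ)
    (ha : 0 < a) (hab : a < b)
    (x : (Fin 2 × Fin n) → ℝ) (hx : ∀ p, 0 < x p)
    (hU : ∀ k, x (1, k) * b < x (0, k)) (i : Fin n) :
    (Summable fun m : Fin n → ℕ => cm α γ a b m * ∏ k, ((x (1, k) / x (0, k) : ℝ) : ℂ) ^ m k) ∧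
    ∃ v, HasSum (fun m : Fin n → ℕ =>
        (m i : ℂ) * (cm α γ a b m * ∏ k, ((x (1, k) / x (0, k) : ℝ) : ℂ) ^ m k)) v ∧
      (x (1, i) : ℂ) * pd (1, i) (Fser α γ a b) x = (∏ k, (x (0, k) : ℂ) ^ (α k)) * v := by
  have hb := ha.trans hab
  obtain ⟨C, hC0, hC⟩ := cm_bound α γ a b ha hab
  have hy0 : ∀ k, 0 < x (1, k) / x (0, k) := fun k => div_pos (hx _) (hx _)
  have hy1 : ∀ k, b * (x (1, k) / x (0, k)) < 1 := fun k => by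
    rw [mul_div_assoc', div_lt_one (hx _), mul_comm]; exact hU k
  have hsum : Summable fun m : Fin n → ℕ =>
      cm α γ a b m * ∏ k, ((x (1, k) / x (0, k) : ℝ) : ℂ) ^ m k := by
    have h1 := (pi_hasSum (R := ℝ)
      (fun k m => ‖bet (α k) m‖ * (b * (x (1, k) / x (0, k))) ^ m) _
      (fun k => (bet_norm_summable (α k) _ (mul_pos hb (hy0 k)).le (hy1 k)).hasSum)
      (fun k => (bet_norm_summable (α k) _ (mul_pos hb (hy0 k)).le (hy1 k)).norm)).1.summable
    refine Summable.of_norm_bounded (h1.mul_left C) fun m => ?_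
    rw [norm_mul, norm_prod]
    simp only [mul_pow, ← mul_assoc]
    rw [Finset.prod_mul_distrib, ← mul_assoc]
    simp only [norm_pow, Complex.norm_real, Real.norm_eq_abs, abs_of_pos (hy0 _)]
    gcongr
    · exact Finset.prod_nonneg fun k _ => pow_nonneg (hy0 k).le _
    · exact hC m
  refine ⟨hsum, ?_⟩
  have hX := hx (0, i)
  obtain ⟨ρ, hρ1, hρ2⟩ : ∃ ρ, x (1, i) / x (0, i) < ρ ∧ ρ < 1 / b :=
    exists_between (by rw [lt_div_iff₀ hb, mul_comm]; exact hy1 i)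
  have hρ0 : 0 < ρ := (hy0 i).trans hρ1
  have hρb : b * ρ < 1 := by rwa [lt_div_iff₀ hb, mul_comm] at hρ2
  -- summable bound
  let f : Fin n → ℕ → ℝ := fun k m =>
    if k = i then ‖bet (α k) m‖ * (m * (b * ρ) ^ m)
    else ‖bet (α k) m‖ * (b * (x (1, k) / x (0, k))) ^ m
  have hf : ∀ k, Summable (f k) := by
    intro k
    by_cases h : k = i
    · simp only [f, h, if_true]
      exact bet_norm_summable' (α i) _ (mul_pos hb hρ0) hρb
    · simp only [f, h, if_false]
      exact bet_norm_summable (α k) _ (mul_pos hb (hy0 k)).le (hy1 k)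
  have hfs := (pi_hasSum f _ (fun k => (hf k).hasSum) (fun k => (hf k).norm)).1.summable
  let g : (Fin n → ℕ) → ℝ → ℂ := fun m s => cm α γ a b m *
    (((s / x (0, i) : ℝ) : ℂ) ^ m i *
      ∏ k ∈ Finset.univ.erase i, ((x (1, k) / x (0, k) : ℝ) : ℂ) ^ m k)
  let g' : (Fin n → ℕ) → ℝ → ℂ := fun m s => cm α γ a b m *
    (((m i : ℂ) * ((s / x (0, i) : ℝ) : ℂ) ^ (m i - 1) * ((1 / x (0, i) : ℝ) : ℂ)) *
      ∏ k ∈ Finset.univ.erase i, ((x (1, k) / x (0, k) : ℝ) : ℂ) ^ m k)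
  have hgd : ∀ m s, HasDerivAt (g m) (g' m s) s := by
    intro m s
    have h1 : HasDerivAt (fun s : ℝ => ((s / x (0, i) : ℝ) : ℂ)) ((1 / x (0, i) : ℝ) : ℂ) s :=
      ((hasDerivAt_id s).div_const (x (0, i))).ofReal_comp
    exact ((h1.pow (m i)).mul_const _).const_mul _
  have hFg : ∀ s, Fser α γ a b (Function.update x (1, i) s)
      = (∏ k, (x (0, k) : ℂ) ^ (α k)) * ∑' m, g m s := by
    intro s
    have h0 : ∀ k, Function.update x (1, i) s (0, k) = x (0, k) := fun k => by
      rw [Function.update_of_ne]; simp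
    unfold Fser
    simp only [h0]
    congr 2
    ext m
    simp only [g]
    rw [← Finset.mul_prod_erase _ _ (Finset.mem_univ i), Function.update_self]
    congr 2
    refine Finset.prod_congr rfl fun k hk => ?_
    rw [Function.update_of_ne]
    simpa using (Finset.ne_of_mem_erase hk)
  have hxg : ∀ m, g m (x (1, i)) = cm α γ a b m * ∏ k, ((x (1, k) / x (0, k) : ℝ) : ℂ) ^ m k := by
    intro m
    simp only [g]
    rw [Finset.mul_prod_erase Finset.univ (fun k => ((x (1, k) / x (0, k) : ℝ) : ℂ) ^ m k)
      (Finset.mem_univ i)]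
  have hxg' : ∀ m, (x (1, i) : ℂ) * g' m (x (1, i)) =
      (m i : ℂ) * (cm α γ a b m * ∏ k, ((x (1, k) / x (0, k) : ℝ) : ℂ) ^ m k) := by
    intro m
    rw [← hxg]
    simp only [g, g']
    rcases Nat.eq_zero_or_pos (m i) with h | h
    · simp [h]
    · obtain ⟨j, hj⟩ : ∃ j, m i = j + 1 := ⟨m i - 1, by omega⟩
      rw [hj]
      simp only [Nat.add_sub_cancel, pow_succ]
      push_cast
      ring
  have hbound : ∀ m s, s ∈ Set.Ioo 0 (ρ * x (0, i)) →
      ‖g' m s‖ ≤ (C / (ρ * x (0, i))) * ∏ k, f k (m k) := by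
    intro m s hs
    have hs0 : 0 < s / x (0, i) := div_pos hs.1 hX
    have hs1 : s / x (0, i) ≤ ρ := by rw [div_le_iff₀ hX]; exact hs.2.le
    have e1 : ∏ k, f k (m k) = (∏ k, (‖bet (α k) (m k)‖ * b ^ m k)) * ((m i * ρ ^ m i) *
        ∏ k ∈ Finset.univ.erase i, (x (1, k) / x (0, k)) ^ m k) := by
      rw [← Finset.mul_prod_erase _ _ (Finset.mem_univ i),
        ← Finset.mul_prod_erase _ (fun k => ‖bet (α k) (m k)‖ * b ^ m k) (Finset.mem_univ i)]
      have : ∏ k ∈ Finset.univ.erase i, f k (m k) = ∏ k ∈ Finset.univ.erase i,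
          ((‖bet (α k) (m k)‖ * b ^ m k) * (x (1, k) / x (0, k)) ^ m k) := by
        refine Finset.prod_congr rfl fun k hk => ?_
        simp only [f, Finset.ne_of_mem_erase hk, if_false, mul_pow, mul_assoc]
      rw [this, Finset.prod_mul_distrib]
      simp only [f, if_true, mul_pow]
      ring
    have e2 : ‖g' m s‖ = ‖cm α γ a b m‖ * ((m i * (s / x (0, i)) ^ (m i - 1) * (1 / x (0, i))) *
        ∏ k ∈ Finset.univ.erase i, (x (1, k) / x (0, k)) ^ m k) := by
      simp only [g', norm_mul, norm_prod, norm_pow, Complex.norm_real, Complex.norm_natCast,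
        Real.norm_eq_abs, abs_of_pos (hy0 _), abs_of_pos hs0, abs_of_pos (one_div_pos.2 hX)]
    have hP : 0 ≤ ∏ k ∈ Finset.univ.erase i, (x (1, k) / x (0, k)) ^ m k :=
      Finset.prod_nonneg fun k _ => pow_nonneg (hy0 k).le _
    have hQ : 0 ≤ ∏ k, (‖bet (α k) (m k)‖ * b ^ m k) :=
      Finset.prod_nonneg fun k _ => by positivity
    have e3 : (m i : ℝ) * (s / x (0, i)) ^ (m i - 1) * (1 / x (0, i)) ≤
        (m i * ρ ^ m i) / (ρ * x (0, i)) := by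
      rcases Nat.eq_zero_or_pos (m i) with h | h
      · simp [h]
      · obtain ⟨j, hj⟩ : ∃ j, m i = j + 1 := ⟨m i - 1, by omega⟩
        rw [hj]
        simp only [Nat.add_sub_cancel, pow_succ]
        calc _ ≤ ((j + 1 : ℕ) : ℝ) * ρ ^ j * (1 / x (0, i)) := by gcongr
          _ = _ := by field_simp
    rw [e1, e2]
    calc _ ≤ (C * ∏ k, (‖bet (α k) (m k)‖ * b ^ m k)) * (((m i * ρ ^ m i) / (ρ * x (0, i))) *
          ∏ k ∈ Finset.univ.erase i, (x (1, k) / x (0, k)) ^ m k) := by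
            gcongr
            exact hC m
      _ = _ := by ring
  have hmem : x (1, i) ∈ Set.Ioo 0 (ρ * x (0, i)) :=
    ⟨hx _, by rwa [div_lt_iff₀ hX] at hρ1⟩
  have hu : Summable fun m : Fin n → ℕ => (C / (ρ * x (0, i))) * ∏ k, f k (m k) :=
    hfs.mul_left _
  clear_value g g' f
  have hg0 : Summable fun m => g m (x (1, i)) := by simpa only [hxg] using hsum
  have hD : HasDerivAt (fun s => ∑' m, g m s) (∑' m, g' m (x (1, i))) (x (1, i)) :=
    hasDerivAt_tsum_of_isPreconnected (g := g) (g' := g') hu isOpen_Ioo isPreconnected_Ioo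
    (fun m s _ => hgd m s) hbound hmem hg0 hmem
  have hg's : Summable fun m => g' m (x (1, i)) :=
    Summable.of_norm_bounded hu fun m => hbound m _ hmem
  refine ⟨x (1, i) * ∑' m, g' m (x (1, i)), ?_, ?_⟩
  · have h := hg's.hasSum.mul_left (x (1, i) : ℂ)
    simpa only [hxg'] using h
  · unfold pd
    simp only [hFg]
    rw [(hD.const_mul _).deriv]
    ring

lemma g_sum {n : ℕ} (α : Fin n → ℂ) (γ : ℂ) (b t : ℝ) (ht : 0 < t) (htb : t ≤ b)
    (x : (Fin 2 × Fin n) → ℝ) (hx : ∀ p, 0 < x p)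
    (hU : ∀ k, x (1, k) * b < x (0, k)) :
    ∃ w, HasSum (fun m : Fin n → ℕ => (∏ k, bet (α k) (m k)) *
      ((t : ℂ) ^ (γ + 1) * (t : ℂ) ^ (∑ k, m k)) *
        ∏ k, ((x (1, k) / x (0, k) : ℝ) : ℂ) ^ m k) w ∧
      (∏ k, (x (0, k) : ℂ) ^ (α k)) * w = gfun α γ t x := by
  have h0 : ∀ k, 0 < t * (x (1, k) / x (0, k)) := fun k => mul_pos ht (div_pos (hx _) (hx _))
  have h1 : ∀ k, t * (x (1, k) / x (0, k)) < 1 := fun k => by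
    rw [mul_div_assoc', div_lt_one (hx _), mul_comm]
    exact (mul_le_mul_of_nonneg_left htb (hx _).le).trans_lt (hU k)
  have h := (pi_hasSum (R := ℂ)
    (fun k m => bet (α k) m * ((t * (x (1, k) / x (0, k)) : ℝ) : ℂ) ^ m) _
    (fun k => bet_hasSum (α k) _ (h0 k).le (h1 k)) (fun k => by
      refine (bet_norm_summable (α k) _ (h0 k).le (h1 k)).congr fun m => ?_
      rw [norm_mul, norm_pow, Complex.norm_real, Real.norm_eq_abs, abs_of_pos (h0 k)])).1
  refine ⟨_, (h.mul_left ((t : ℂ) ^ (γ + 1))).congr_fun ?_, ?_⟩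
  · intro m
    simp only [Complex.ofReal_mul, mul_pow, Finset.prod_mul_distrib, Finset.prod_pow_eq_pow_sum]
    ring
  · unfold gfun
    rw [mul_left_comm, ← Finset.prod_mul_distrib]
    congr 1
    refine Finset.prod_congr rfl fun k _ => ?_
    have hp : 0 ≤ 1 + t * (x (1, k) / x (0, k)) := by linarith [h0 k]
    have e := Complex.mul_cpow_ofReal_nonneg (hx (0, k)).le hp (α k)
    have hne : (x (0, k) : ℂ) ≠ 0 := by exact_mod_cast (hx (0, k)).ne'
    rw [show (1 : ℂ) + ((t * (x (1, k) / x (0, k)) : ℝ) : ℂ)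
      = ((1 + t * (x (1, k) / x (0, k)) : ℝ) : ℂ) by push_cast; rfl, ← e]
    congr 1
    push_cast
    field_simp

/-- on `U₀` the series `F` satisfies the inhomogeneous equation
`Σᵢ x_{2i}·∂F/∂x_{2i} + (γ+1)·F = g(b,x) − g(a,x)`. -/
theorem stmt9 {n : ℕ} (hn : 1 ≤ n) (α : Fin n → ℂ) (γ : ℂ) (a b : ℝ)
    (ha : 0 < a) (hab : a < b) (hγ : ∀ j : ℕ, γ ≠ -((j : ℂ) + 1))
    (x : (Fin 2 × Fin n) → ℝ) (hx : ∀ p, 0 < x p)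
    (hU : ∀ k, x (1, k) * b < x (0, k)) :
    ∑ i, (x (1, i) : ℂ) * pd (1, i) (Fser α γ a b) x
      + (γ + 1) * Fser α γ a b x
      = gfun α γ b x - gfun α γ a x := by
  have hb := ha.trans hab
  have hp := fun i => (pd_lemma α γ a b ha hab x hx hU i).2
  choose v hv hv' using hp
  have hsum := (pd_lemma α γ a b ha hab x hx hU ⟨0, hn⟩).1
  obtain ⟨w, hw, hw'⟩ := g_sum α γ b b hb le_rfl x hx hU
  obtain ⟨z, hz, hz'⟩ := g_sum α γ b a ha hab.le x hx hU
  have h1 := (hasSum_sum (s := Finset.univ) fun i _ => hv i).add (hsum.hasSum.mul_left (γ + 1))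
  have h2 := hw.sub hz
  have h3 := h1.unique (h2.congr_fun fun m => by
    have hne : γ + ((∑ k, m k : ℕ) : ℂ) + 1 ≠ 0 := by
      intro h
      apply hγ (∑ k, m k)
      linear_combination h
    rw [← Finset.sum_mul, ← Nat.cast_sum, ← add_mul, cm_eq α γ a b ha hb]
    field_simp
    ring)
  rw [← hw', ← hz', ← mul_sub, ← h3]
  simp only [hv', ← Finset.mul_sum]
  unfold Fser
  ring
end

section
/- For each i with 1 ≤ i ≤ n and every point x ∈ U₀, the series F satisfies x_{1i}·∂F/∂x_{1i}(x) + x_{2i}·∂F/∂x_{2i}(x) = α_i·F(x); that is, F is annihilated by the Euler operator θ_{1i} + θ_{2i} − α_i, where θ_{ij} = x_{ij}∂/∂x_{ij}. -/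
open Complex Function Polynomial

lemma aux_summable_prod {n : ℕ} (f : Fin n → ℕ → ℝ) (h0 : ∀ k j, 0 ≤ f k j)
    (hf : ∀ k, Summable (f k)) : Summable (fun m : Fin n → ℕ => ∏ k, f k (m k)) := by
  classical
  refine summable_of_sum_le (c := ∏ k, ∑' j, f k j)
    (fun m => Finset.prod_nonneg fun k _ => h0 k _) fun u => ?_
  calc ∑ m ∈ u, ∏ k, f k (m k)
      ≤ ∑ m ∈ Fintype.piFinset (fun k => u.image (fun m => m k)), ∏ k, f k (m k) := by
        refine Finset.sum_le_sum_of_subset_of_nonneg ?_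
          (fun m _ _ => Finset.prod_nonneg fun k _ => h0 k _)
        intro m hm
        rw [Fintype.mem_piFinset]
        intro k
        exact Finset.mem_image_of_mem (fun m => m k) hm
    _ = ∏ k, ∑ j ∈ u.image (fun m => m k), f k j := (Finset.prod_univ_sum _ _).symm
    _ ≤ ∏ k, ∑' j, f k j := by
        refine Finset.prod_le_prod (fun k _ => Finset.sum_nonneg fun j _ => h0 k j) fun k _ => ?_
        exact (hf k).sum_le_tsum _ (fun j _ => h0 k j)

lemma aux_summable_one (α : ℂ) (q : ℝ) (hq0 : 0 ≤ q) (hq : q < 1) :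
    Summable (fun j : ℕ => ‖(ascPochhammer ℂ j).eval (-α)‖ / (j.factorial : ℝ) * q ^ j) := by
  obtain ⟨r, hqr, hr⟩ := exists_between hq
  refine summable_of_ratio_norm_eventually_le (r := r) hr ?_
  obtain ⟨N, hN⟩ := exists_nat_gt (q * ‖α‖ / (r - q))
  filter_upwards [Filter.eventually_ge_atTop N] with j hj
  have hj' : (N : ℝ) ≤ j := by exact_mod_cast hj
  have hrq : 0 < r - q := sub_pos.mpr hqr
  rw [div_lt_iff₀ hrq] at hN
  have hb : q * ‖-α + (j : ℂ)‖ ≤ r * (j + 1) := by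
    have h1 : ‖-α + (j : ℂ)‖ ≤ ‖α‖ + j := by
      refine (norm_add_le _ _).trans ?_
      simp
    have h2 : (N : ℝ) * (r - q) ≤ j * (r - q) := by gcongr
    nlinarith [mul_le_mul_of_nonneg_left h1 hq0]
  have hP := norm_nonneg ((ascPochhammer ℂ j).eval (-α))
  have hfac : (0 : ℝ) < j.factorial := by exact_mod_cast j.factorial_pos
  have e1 : ‖‖(ascPochhammer ℂ j).eval (-α)‖ / (j.factorial : ℝ) * q ^ j‖
      = ‖(ascPochhammer ℂ j).eval (-α)‖ / (j.factorial : ℝ) * q ^ j :=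
    Real.norm_of_nonneg (by positivity)
  have e2 : ‖‖(ascPochhammer ℂ (j+1)).eval (-α)‖ / ((j+1).factorial : ℝ) * q ^ (j+1)‖
      = ‖(ascPochhammer ℂ j).eval (-α)‖ / (j.factorial : ℝ) * q ^ j *
        (q * ‖-α + (j : ℂ)‖ / (j + 1)) := by
    rw [Real.norm_of_nonneg (by positivity), ascPochhammer_succ_eval, norm_mul,
      Nat.factorial_succ]
    push_cast
    field_simp
    ring
  rw [e1, e2, mul_comm r]
  refine mul_le_mul_of_nonneg_left ?_ (by positivity)
  rw [div_le_iff₀ (by positivity)]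
  exact hb

lemma aux_inv_bound (γ : ℂ) : ∃ C : ℝ, 0 ≤ C ∧ ∀ N : ℕ, ‖γ + (N : ℂ) + 1‖⁻¹ ≤ C := by
  obtain ⟨M, hM⟩ := exists_nat_gt ‖γ‖
  have hs : 0 ≤ ∑ N ∈ Finset.range M, ‖γ + (N : ℂ) + 1‖⁻¹ :=
    Finset.sum_nonneg fun _ _ => by positivity
  refine ⟨1 + ∑ N ∈ Finset.range M, ‖γ + (N : ℂ) + 1‖⁻¹, by positivity, fun N => ?_⟩
  by_cases h : N < M
  · have := Finset.single_le_sum (f := fun N : ℕ => ‖γ + (N : ℂ) + 1‖⁻¹)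
      (fun _ _ => by positivity) (Finset.mem_range.mpr h)
    linarith
  · have hN : (M : ℝ) ≤ N := by exact_mod_cast not_lt.mp h
    have h1 : (1 : ℝ) ≤ ‖γ + (N : ℂ) + 1‖ := by
      have h2 := norm_sub_le (γ + (N : ℂ) + 1) γ
      have h3 : ‖γ + (N : ℂ) + 1 - γ‖ = N + 1 := by
        have : γ + (N : ℂ) + 1 - γ = ((N + 1 : ℕ) : ℂ) := by push_cast; ring
        rw [this, Complex.norm_natCast]; push_cast; ring
      linarith
    have := inv_le_one_of_one_le₀ h1
    linarith

lemma aux_cm_bound {n : ℕ} (α : Fin n → ℂ) (γ : ℂ) (a b : ℝ) (ha : 0 < a) (hab : a < b) :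
    ∃ C : ℝ, 0 ≤ C ∧ ∀ m : Fin n → ℕ, ‖cm α γ a b m‖ ≤
      C * ∏ k, (‖(ascPochhammer ℂ (m k)).eval (-(α k))‖ / ((m k).factorial : ℝ) * b ^ m k) := by
  obtain ⟨C, hC, hCb⟩ := aux_inv_bound γ
  have hb : 0 < b := ha.trans hab
  refine ⟨C * (b ^ (γ.re + 1) + a ^ (γ.re + 1)), by positivity, fun m => ?_⟩
  have key : ∀ t : ℝ, 0 < t → t ≤ b →
      ‖(t : ℂ) ^ (γ + ((∑ k, m k : ℕ) : ℂ) + 1)‖ ≤ t ^ (γ.re + 1) * b ^ (∑ k, m k) := by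
    intro t ht htb
    rw [Complex.norm_cpow_eq_rpow_re_of_pos ht]
    have : (γ + ((∑ k, m k : ℕ) : ℂ) + 1).re = (γ.re + 1) + ((∑ k, m k : ℕ) : ℝ) := by
      rw [Complex.add_re, Complex.add_re, Complex.natCast_re, Complex.one_re]; ring
    rw [this, Real.rpow_add ht, Real.rpow_natCast]
    gcongr
  have hd := (norm_sub_le _ _).trans (add_le_add (key b hb le_rfl) (key a ha hab.le))
  unfold cm
  rw [norm_div, norm_mul, norm_mul, norm_mul, norm_pow, norm_neg, norm_one, one_pow, one_mul,
    norm_prod, norm_prod]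
  rw [Finset.prod_mul_distrib, Finset.prod_div_distrib, Finset.prod_pow_eq_pow_sum]
  simp only [Complex.norm_natCast]
  have hf : (0 : ℝ) < ∏ k, ((m k).factorial : ℝ) :=
    Finset.prod_pos fun k _ => by exact_mod_cast (m k).factorial_pos
  have hP : 0 ≤ ∏ k, ‖(ascPochhammer ℂ (m k)).eval (-(α k))‖ :=
    Finset.prod_nonneg fun _ _ => norm_nonneg _
  rw [div_eq_mul_inv, mul_inv]
  calc _ ≤ (∏ k, ‖(ascPochhammer ℂ (m k)).eval (-(α k))‖) *
        (b ^ (γ.re + 1) * b ^ (∑ k, m k) + a ^ (γ.re + 1) * b ^ (∑ k, m k)) *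
        (C * (∏ k, ((m k).factorial : ℝ))⁻¹) := by
        gcongr
        exact hCb _
    _ = _ := by ring

lemma aux_diff {n : ℕ} (α : Fin n → ℂ) (γ : ℂ) (a b : ℝ) (ha : 0 < a) (hab : a < b)
    (i : Fin n) (y : Fin n → ℝ) (hy : ∀ k, 0 < y k) (hyb : ∀ k, y k * b < 1) :
    DifferentiableAt ℂ (fun z : ℂ => ∑' m : Fin n → ℕ, cm α γ a b m *
      ∏ k, (Function.update (fun k => (y k : ℂ)) i z k) ^ m k) (y i : ℂ) := by
  have hb : 0 < b := ha.trans hab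
  obtain ⟨r, hr1, hr2⟩ := exists_between ((lt_div_iff₀ hb).mpr (hyb i))
  rw [lt_div_iff₀ hb] at hr2
  have hr0 : 0 < r := (hy i).trans hr1
  obtain ⟨C, hC, hCb⟩ := aux_cm_bound α γ a b ha hab
  set w : Fin n → ℝ := Function.update y i r with hw
  have hw0 : ∀ k, 0 < w k := by
    intro k
    by_cases h : k = i
    · subst h; simpa [hw] using hr0
    · simpa [hw, h] using hy k
  have hw1 : ∀ k, b * w k < 1 := by
    intro k
    by_cases h : k = i
    · subst h; simpa [hw, mul_comm] using hr2
    · simpa [hw, h, mul_comm] using hyb k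
  have hsum : Summable (fun m : Fin n → ℕ => C *
      ∏ k, (‖(ascPochhammer ℂ (m k)).eval (-(α k))‖ / ((m k).factorial : ℝ)
        * (b * w k) ^ m k)) := by
    refine Summable.mul_left _ ?_
    refine aux_summable_prod (fun k j => ‖(ascPochhammer ℂ j).eval (-(α k))‖ /
      (j.factorial : ℝ) * (b * w k) ^ j) ?_ ?_
    · intro k j
      have := hw0 k
      positivity
    · intro k
      exact aux_summable_one _ _ (mul_pos hb (hw0 k)).le (hw1 k)
  refine (Complex.differentiableOn_tsum_of_summable_norm (U := Metric.ball (0 : ℂ) r) hsum ?_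
    Metric.isOpen_ball ?_).differentiableAt (Metric.isOpen_ball.mem_nhds ?_)
  · intro m
    refine DifferentiableOn.const_mul ?_ _
    refine Differentiable.differentiableOn ?_
    refine Differentiable.fun_finsetProd fun k _ => ?_
    refine Differentiable.fun_pow ?_ _
    by_cases h : k = i
    · subst h; simp
    · simp [h]
  · intro m z hz
    rw [mem_ball_zero_iff] at hz
    rw [norm_mul, norm_prod]
    calc _ ≤ (C * ∏ k, (‖(ascPochhammer ℂ (m k)).eval (-(α k))‖ / ((m k).factorial : ℝ)
          * b ^ m k)) * ∏ k, w k ^ m k := by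
          refine mul_le_mul (hCb m) ?_ (Finset.prod_nonneg fun _ _ => norm_nonneg _)
            (mul_nonneg hC (Finset.prod_nonneg fun _ _ => by positivity))
          refine Finset.prod_le_prod (fun _ _ => norm_nonneg _) fun k _ => ?_
          rw [norm_pow]
          refine pow_le_pow_left₀ (norm_nonneg _) ?_ _
          by_cases h : k = i
          · subst h; simpa [hw] using hz.le
          · simp [hw, h, abs_of_pos (hy k)]
      _ = _ := by
          rw [mul_assoc, ← Finset.prod_mul_distrib]
          congr 1
          refine Finset.prod_congr rfl fun k _ => ?_
          rw [mul_pow]; ring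
  · rw [mem_ball_zero_iff, Complex.norm_real, Real.norm_of_nonneg (hy i).le]
    exact hr1

/-- on `U₀` the series `F` is annihilated by the Euler operator
`θ_{1i} + θ_{2i} − α_i`. -/
theorem stmt10 {n : ℕ} (hn : 1 ≤ n) (α : Fin n → ℂ) (γ : ℂ) (a b : ℝ)
    (ha : 0 < a) (hab : a < b) (hγ : ∀ j : ℕ, γ ≠ -((j : ℂ) + 1))
    (i : Fin n) (x : (Fin 2 × Fin n) → ℝ) (hx : ∀ p, 0 < x p)
    (hU : ∀ k, x (1, k) * b < x (0, k)) :
    (x (0, i) : ℂ) * pd (0, i) (Fser α γ a b) x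
      + (x (1, i) : ℂ) * pd (1, i) (Fser α γ a b) x
      = α i * Fser α γ a b x := by
  classical
  set y : Fin n → ℝ := fun k => x (1, k) / x (0, k) with hydef
  have hy : ∀ k, 0 < y k := fun k => div_pos (hx _) (hx _)
  have hyb : ∀ k, y k * b < 1 := by
    intro k
    rw [hydef]
    simp only
    rw [div_mul_eq_mul_div, div_lt_one (hx _)]
    exact hU k
  set G : ℂ → ℂ := fun z : ℂ => ∑' m : Fin n → ℕ, cm α γ a b m *
      ∏ k, (Function.update (fun k => (y k : ℂ)) i z k) ^ m k with hG
  have hGd : HasDerivAt G (deriv G (y i : ℂ)) (y i : ℂ) :=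
    (aux_diff α γ a b ha hab i y hy hyb).hasDerivAt
  set D := deriv G (y i : ℂ) with hD
  set Q : ℂ := ∏ k ∈ Finset.univ.erase i, (x (0, k) : ℂ) ^ (α k) with hQ
  have hx0 : (x (0, i) : ℂ) ≠ 0 := by exact_mod_cast (hx (0, i)).ne'
  have f0 : ∀ s : ℝ, Fser α γ a b (Function.update x (0, i) s)
      = ((s : ℂ) ^ (α i) * Q) * G ((x (1, i) / s : ℝ) : ℂ) := by
    intro s
    unfold Fser
    congr 1
    · rw [← Finset.mul_prod_erase Finset.univ _ (Finset.mem_univ i)]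
      congr 1
      · simp
      · refine Finset.prod_congr rfl fun k hk => ?_
        have hk' : k ≠ i := Finset.ne_of_mem_erase hk
        simp [Function.update_of_ne, hk']
    · rw [hG]
      refine tsum_congr fun m => ?_
      congr 1
      refine Finset.prod_congr rfl fun k _ => ?_
      by_cases h : k = i
      · subst h; simp
      · simp [h, hydef]
  have f1 : ∀ s : ℝ, Fser α γ a b (Function.update x (1, i) s)
      = ((x (0, i) : ℂ) ^ (α i) * Q) * G ((s / x (0, i) : ℝ) : ℂ) := by
    intro s
    unfold Fser
    congr 1
    · rw [← Finset.mul_prod_erase Finset.univ _ (Finset.mem_univ i)]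
      congr 1
    · rw [hG]
      refine tsum_congr fun m => ?_
      congr 1
      refine Finset.prod_congr rfl fun k _ => ?_
      by_cases h : k = i
      · subst h; simp
      · simp [h, hydef]
  have hF : Fser α γ a b x = ((x (0, i) : ℂ) ^ (α i) * Q) * G (y i : ℂ) := by
    have := f0 (x (0, i))
    rwa [Function.update_eq_self] at this
  have d1 : HasDerivAt (fun s : ℝ => Fser α γ a b (Function.update x (1, i) s))
      (((x (0, i) : ℂ) ^ (α i) * Q) * (D * (((1 / x (0, i) : ℝ)) : ℂ))) (x (1, i)) := by
    simp only [f1]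
    refine HasDerivAt.const_mul _ ?_
    have h1 : HasDerivAt (fun s : ℝ => ((s / x (0, i) : ℝ) : ℂ)) ((1 / x (0, i) : ℝ) : ℂ)
        (x (1, i)) := ((hasDerivAt_id (x (1, i))).div_const (x (0, i))).ofReal_comp
    exact HasDerivAt.comp (x (1, i)) (h₂ := G) (h := fun s : ℝ => ((s / x (0, i) : ℝ) : ℂ)) hGd h1
  have d0 : HasDerivAt (fun s : ℝ => Fser α γ a b (Function.update x (0, i) s))
      ((α i * (x (0, i) : ℂ) ^ (α i - 1) * Q) * G (y i : ℂ) +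
        ((x (0, i) : ℂ) ^ (α i) * Q) * (D * ((-(x (1, i)) / x (0, i) ^ 2 : ℝ) : ℂ)))
      (x (0, i)) := by
    simp only [f0]
    have h1 : HasDerivAt (fun s : ℝ => ((x (1, i) / s : ℝ) : ℂ))
        ((-(x (1, i)) / x (0, i) ^ 2 : ℝ) : ℂ) (x (0, i)) := by
      refine HasDerivAt.ofReal_comp ?_
      have := (hasDerivAt_const (x (0, i)) (x (1, i))).fun_div (hasDerivAt_id (x (0, i)))
        (hx _).ne'
      simpa using this
    have h2 : HasDerivAt (fun s : ℝ => G ((x (1, i) / s : ℝ) : ℂ))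
        (D * ((-(x (1, i)) / x (0, i) ^ 2 : ℝ) : ℂ)) (x (0, i)) :=
      HasDerivAt.comp (x (0, i)) (h₂ := G) (h := fun s : ℝ => ((x (1, i) / s : ℝ) : ℂ)) hGd h1
    have h3 : HasDerivAt (fun s : ℝ => (s : ℂ) ^ (α i))
        (α i * (x (0, i) : ℂ) ^ (α i - 1)) (x (0, i)) := by
      have h4 : HasDerivAt (fun z : ℂ => z ^ (α i)) (α i * (x (0, i) : ℂ) ^ (α i - 1) * 1)
          (x (0, i) : ℂ) :=
        (hasDerivAt_id _).cpow_const (Or.inl (by simpa using hx (0, i)))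
      simpa using h4.comp_ofReal
    exact (h3.mul_const Q).fun_mul h2
  unfold pd
  rw [d0.deriv, d1.deriv, hF, Complex.cpow_sub _ _ hx0, Complex.cpow_one]
  push_cast
  field_simp
  ring
end
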